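/- For every integer n ≥ 1, the total number of strict left-to-right maxima in all Dyck bridges of length 2n equals 4^(n−1). -/

import Mathlib

/-- The step associated to a letter: `true` is an up step `+1`, `false` a down step `-1`. -/
def stepVal (b : Bool) : ℤ := if b then 1 else -1

/-- Partial sum `S_i`: the sum of the first `i` steps of the word `w`. -/
def psum {L : ℕ} (w : Fin L → Bool) (i : ℕ) : ℤ :=
  ∑ j : Fin L, if (j : ℕ) < i then stepVal (w j) else 0

/-- A Dyck bridge: a `±1` word whose total sum is `0`. -/
def IsBridge {L : ℕ} (w : Fin L → Bool) : Prop := psum w L = 0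

/-- A Dyck path: a bridge all of whose partial sums are nonnegative. -/
def IsDyck {L : ℕ} (w : Fin L → Bool) : Prop :=
  IsBridge w ∧ ∀ i : ℕ, 0 ≤ psum w i

/-- A peak at (0-based) position `i`: step `i` is up and step `i+1` is down. -/
def IsPeak {L : ℕ} (w : Fin L → Bool) (i : ℕ) : Prop :=
  ∃ j k : Fin L, (j : ℕ) = i ∧ (k : ℕ) = i + 1 ∧ w j = true ∧ w k = false

/-- The height of the peak at (0-based) position `i`, i.e. the altitude
reached by its up step. -/
def peakHeight {L : ℕ} (w : Fin L → Bool) (i : ℕ) : ℤ := psum w (i + 1)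

/-- A crossing of the x-axis at (1-based) index `i`: `0 < i < L`, `S_i = 0`,
and the steps `w_i`, `w_{i+1}` (1-based) are equal. -/
def IsCrossing {L : ℕ} (w : Fin L → Bool) (i : ℕ) : Prop :=
  0 < i ∧ i < L ∧ psum w i = 0 ∧
    ∃ j k : Fin L, (j : ℕ) + 1 = i ∧ (k : ℕ) = i ∧ w j = w k

/-!
Cut a bridge at a strict left-to-right maximum of height `h` and delete the down step that follows
it. The result is a word of length `2 * n - 1` and sum `1` with a distinguished record of its
partial sums. Reflecting everything after the record turns the sum into `2 * h - 1 > 0`, and the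
record is recovered as the first passage of the reflected word through half of its (odd) sum,
rounded up. So the maxima correspond to the words of length `2 * n - 1` with positive sum, which are
half of all words.
-/

section PartialSums

variable {L : ℕ} (w : Fin L → Bool)

theorem stepVal_not (b : Bool) : stepVal (!b) = -stepVal b := by
  cases b <;> rfl

theorem psum_zero : psum w 0 = 0 := by
  simp [psum]

theorem psum_length : psum w L = ∑ j, stepVal (w j) := by
  simp [psum]

theorem psum_succ (j : Fin L) : psum w (j + 1) = psum w j + stepVal (w j) := by
  have single : stepVal (w j) = ∑ i, if i = j then stepVal (w i) else 0 := by simp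
  rw [single, psum, psum, ← Finset.sum_add_distrib]
  refine Finset.sum_congr rfl fun i _ => ?_
  simp only [Fin.ext_iff]
  split_ifs <;> omega

variable {w} in
theorem psum_succ_of_up {j : Fin L} (hj : w j = true) : psum w (j + 1) = psum w j + 1 := by
  rw [psum_succ, hj]; rfl

variable {w} in
theorem psum_succ_of_down {j : Fin L} (hj : w j = false) : psum w (j + 1) = psum w j - 1 := by
  rw [psum_succ, hj]; rfl

theorem psum_succ_le (k : ℕ) : psum w (k + 1) ≤ psum w k + 1 := by
  by_cases hk : k < L
  · cases hw : w ⟨k, hk⟩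
    · linarith [psum_succ_of_down hw]
    · exact (psum_succ_of_up hw).le
  · have stationary : psum w (k + 1) = psum w k :=
      Finset.sum_congr rfl fun j _ => by rw [if_pos (by omega), if_pos (by omega)]
    omega

theorem odd_psum_length_iff : Odd (psum w L) ↔ Odd L := by
  have even_diff : Even (psum w L - L) := by
    have sum_eq : psum w L - L = ∑ j, (stepVal (w j) - 1) := by simp [psum_length]
    rw [sum_eq]
    exact Finset.even_sum _ fun j _ => by cases w j <;> decide
  rw [Int.even_sub, Int.even_coe_nat] at even_diff
  rw [← Int.not_even_iff_odd, ← Nat.not_even_iff_odd, even_diff]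

end PartialSums

section Records

variable {L L' : ℕ} {w : Fin L → Bool} {w' : Fin L' → Bool} {k m m' : ℕ} {h : ℤ}

/-- `m` is a record time of `w`: the partial sum `S_m` is positive and exceeds every earlier partial
sum, so that `m` is the first passage time of `w` at the height `S_m`. -/
def IsRecord (w : Fin L → Bool) (m : ℕ) : Prop :=
  0 < psum w m ∧ ∀ k < m, psum w k < psum w m

theorem IsRecord.pos (hm : IsRecord w m) : 0 < m := by
  by_contra! hm0
  simpa [Nat.le_zero.mp hm0, psum_zero] using hm.1

theorem IsRecord.of_psum_eq (hm : IsRecord w m) (heq : ∀ k ≤ m, psum w' k = psum w k) :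
    IsRecord w' m := by
  refine ⟨?_, fun k hk => ?_⟩
  · simpa only [heq m le_rfl] using hm.1
  · simpa only [heq m le_rfl, heq k hk.le] using hm.2 k hk

theorem IsRecord.eq_of_psum_eq (hm : IsRecord w m) (hm' : IsRecord w m')
    (heq : psum w m = psum w m') : m = m' := by
  rcases lt_trichotomy m m' with hlt | rfl | hlt
  · exact absurd heq (hm'.2 m hlt).ne
  · rfl
  · exact absurd heq (hm.2 m' hlt).ne'

theorem IsRecord.apply_eq_true {j : Fin L} (hj : IsRecord w (j + 1)) : w j = true := by
  by_contra hdown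
  have := psum_succ_of_down (Bool.eq_false_of_not_eq_true hdown)
  have := hj.2 j (Nat.lt_succ_self j)
  omega

theorem exists_isRecord_psum_eq (hpos : 0 < h) (hle : h ≤ psum w k) :
    ∃ m ≤ k, IsRecord w m ∧ psum w m = h := by
  classical
  have reached : ∃ m, h ≤ psum w m := ⟨k, hle⟩
  obtain ⟨m, ⟨hm, before⟩⟩ : ∃ m, h ≤ psum w m ∧ ∀ l < m, psum w l < h :=
    ⟨Nat.find reached, Nat.find_spec reached, fun l hl => not_le.mp (Nat.find_min reached hl)⟩
  have hmk : m ≤ k := by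
    by_contra! hlt
    exact (before k hlt).not_ge hle
  have height : psum w m = h := by
    cases m with
    | zero => rw [psum_zero] at hm; omega
    | succ i =>
      have := before i (Nat.lt_succ_self i)
      have := psum_succ_le w i
      omega
  exact ⟨m, hmk, ⟨height ▸ hpos, fun l hl => height ▸ before l hl⟩, height⟩

end Records

section LeftToRightMaxima

variable {L : ℕ} {w : Fin L → Bool} {i : ℕ}

/-- A peak at (0-based) position `i` is a strict left-to-right maximum: its height is at least `1`
and exceeds the height of every earlier peak. -/
def IsStrictLTRMax (w : Fin L → Bool) (i : ℕ) : Prop :=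
  IsPeak w i ∧ 1 ≤ peakHeight w i ∧ ∀ j, IsPeak w j → j < i → peakHeight w j < peakHeight w i

-- The run of down steps ending here starts at a peak: the walk has climbed from `S_0 = 0`.
theorem exists_isPeak_of_down {k : ℕ} (hk : k < L) (hdown : w ⟨k, hk⟩ = false)
    (hpos : 0 < psum w k) : ∃ j < k, IsPeak w j ∧ psum w k ≤ peakHeight w j := by
  induction k with
  | zero => simp [psum_zero] at hpos
  | succ k ih =>
    have hkL : k < L := Nat.lt_of_succ_lt hk
    cases hw : w ⟨k, hkL⟩ with
    | true => exact ⟨k, k.lt_succ_self, ⟨⟨k, hkL⟩, ⟨k + 1, hk⟩, rfl, rfl, hw, hdown⟩, le_rfl⟩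
    | false =>
      have step : psum w (k + 1) = psum w k - 1 := psum_succ_of_down hw
      obtain ⟨j, hj, hpeak, hle⟩ := ih hkL hw (by omega)
      exact ⟨j, by omega, hpeak, by omega⟩

theorem IsStrictLTRMax.isRecord (hi : IsStrictLTRMax w i) : IsRecord w (i + 1) := by
  obtain ⟨⟨j, -, rfl, -, hup, -⟩, hpos, hmax⟩ := hi
  simp only [peakHeight] at hpos hmax
  refine ⟨hpos, fun k hk => ?_⟩
  induction Nat.le_of_lt_succ hk using Nat.decreasingInduction with
  | self => linarith [psum_succ_of_up hup]
  | of_succ k hkj ih =>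
    have next : psum w (k + 1) < psum w (j + 1) := ih (by omega)
    have hkL : k < L := hkj.trans j.isLt
    cases hw : w ⟨k, hkL⟩ with
    | true =>
      have step : psum w (k + 1) = psum w k + 1 := psum_succ_of_up hw
      omega
    | false =>
      by_contra! high
      obtain ⟨p, hpk, hpeak, hle⟩ := exists_isPeak_of_down hkL hw (by omega)
      exact (high.trans hle).not_gt (hmax p hpeak (hpk.trans hkj))

theorem isStrictLTRMax_iff :
    IsStrictLTRMax w i ↔ IsRecord w (i + 1) ∧ ∃ k : Fin L, (k : ℕ) = i + 1 ∧ w k = false := by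
  constructor
  · intro hi
    obtain ⟨-, k, -, hk, -, hdown⟩ := hi.1
    exact ⟨hi.isRecord, k, hk, hdown⟩
  · rintro ⟨hrec, k, hk, hdown⟩
    have hi : i < L := by omega
    have hup : w ⟨i, hi⟩ = true := IsRecord.apply_eq_true (j := ⟨i, hi⟩) hrec
    exact ⟨⟨⟨i, hi⟩, k, rfl, hk, hup, hdown⟩, hrec.1, fun j _ hj => hrec.2 (j + 1) (by omega)⟩

end LeftToRightMaxima

section Insertion

variable {N : ℕ} (p : Fin (N + 1)) (b : Bool) (u : Fin N → Bool)

theorem psum_insertNth_of_le {k : ℕ} (hk : k ≤ p) :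
    psum (p.insertNth b u : Fin (N + 1) → Bool) k = psum u k := by
  have position (j : Fin N) : (p.succAbove j : ℕ) < k ↔ (j : ℕ) < k := by
    simp only [Fin.succAbove, Fin.lt_def, Fin.val_castSucc]
    split_ifs
    · rfl
    · rw [Fin.val_succ]; omega
  simp [psum, Fin.sum_univ_succAbove _ p, position, hk.not_gt]

theorem psum_insertNth_length :
    psum (p.insertNth b u : Fin (N + 1) → Bool) (N + 1) = stepVal b + psum u N := by
  simp [psum_length, Fin.sum_univ_succAbove _ p]

theorem isBridge_insertNth_down_iff :
    IsBridge (p.insertNth false u : Fin (N + 1) → Bool) ↔ psum u N = 1 := by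
  rw [IsBridge, psum_insertNth_length, show stepVal false = -1 from rfl]
  omega

theorem isStrictLTRMax_insertNth_down_iff (i : Fin N) :
    IsStrictLTRMax (i.succ.insertNth false u : Fin (N + 1) → Bool) i ↔ IsRecord u (i + 1) := by
  rw [isStrictLTRMax_iff]
  have psum_eq (k : ℕ) (hk : k ≤ i + 1) :
      psum (i.succ.insertNth false u : Fin (N + 1) → Bool) k = psum u k :=
    psum_insertNth_of_le i.succ false u hk
  constructor
  · rintro ⟨hrec, -⟩
    exact hrec.of_psum_eq fun k hk => (psum_eq k hk).symm
  · intro hrec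
    exact ⟨hrec.of_psum_eq psum_eq, i.succ, rfl, by simp⟩

end Insertion

section Reflection

variable {L : ℕ} (m : ℕ) (w : Fin L → Bool)

/-- The reflection of a word at time `m`, as in the reflection principle: the first `m` steps are
kept and all later steps are reversed. -/
def reflectFrom (m : ℕ) (w : Fin L → Bool) : Fin L → Bool :=
  fun j => if (j : ℕ) < m then w j else !w j

theorem reflectFrom_involutive : Function.Involutive (reflectFrom (L := L) m) := by
  intro w
  funext j
  by_cases hj : (j : ℕ) < m <;> simp [reflectFrom, hj]

theorem psum_reflectFrom_of_le {k : ℕ} (hk : k ≤ m) : psum (reflectFrom m w) k = psum w k := by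
  refine Finset.sum_congr rfl fun j _ => ?_
  split_ifs with hj
  · rw [reflectFrom, if_pos (hj.trans_le hk)]
  · rfl

theorem psum_reflectFrom_length : psum (reflectFrom m w) L = 2 * psum w m - psum w L := by
  rw [psum_length, psum_length, psum, Finset.mul_sum, ← Finset.sum_sub_distrib]
  refine Finset.sum_congr rfl fun j _ => ?_
  by_cases hj : (j : ℕ) < m
  · simp only [reflectFrom, if_pos hj]; ring
  · simp only [reflectFrom, if_neg hj, stepVal_not]; ring

variable {m w} in
theorem IsRecord.reflectFrom (hm : IsRecord w m) : IsRecord (reflectFrom m w) m :=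
  hm.of_psum_eq fun _ hk => psum_reflectFrom_of_le m w hk

end Reflection

section Counting

variable {N : ℕ}

theorem bijOn_insertNth_down :
    Set.BijOn
      (fun p : (Fin N → Bool) × Fin N =>
        ((p.2.succ.insertNth false p.1 : Fin (N + 1) → Bool), (p.2 : ℕ)))
      {p | psum p.1 N = 1 ∧ IsRecord p.1 (p.2 + 1)}
      {p | IsBridge p.1 ∧ IsStrictLTRMax p.1 p.2} := by
  refine ⟨?_, ?_, ?_⟩
  · rintro ⟨u, i⟩ ⟨hsum, hrec⟩
    exact ⟨(isBridge_insertNth_down_iff i.succ u).mpr hsum,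
      (isStrictLTRMax_insertNth_down_iff u i).mpr hrec⟩
  · rintro ⟨u, i⟩ - ⟨u', i'⟩ - heq
    obtain ⟨hword, hpos⟩ := Prod.mk.inj heq
    obtain rfl : i = i' := Fin.ext hpos
    exact Prod.ext (Fin.insertNth_right_injective (α := fun _ => Bool) false hword) rfl
  · rintro ⟨w, i⟩ ⟨hbridge, hmax⟩
    obtain ⟨-, k, -, hk, -, hdown⟩ := hmax.1
    obtain ⟨j, rfl⟩ : ∃ j : Fin N, k = j.succ :=
      Fin.eq_succ_of_ne_zero fun hk0 => by simp [hk0] at hk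
    obtain rfl : (j : ℕ) = i := Nat.succ_injective hk
    obtain ⟨u, rfl⟩ : ∃ u : Fin N → Bool, w = j.succ.insertNth false u :=
      ⟨j.succ.removeNth w, by rw [← hdown, Fin.insertNth_self_removeNth]⟩
    exact ⟨(u, j), ⟨(isBridge_insertNth_down_iff j.succ u).mp hbridge,
      (isStrictLTRMax_insertNth_down_iff u j).mp hmax⟩, rfl⟩

theorem bijOn_reflectFrom (hN : Odd N) :
    Set.BijOn (fun p : (Fin N → Bool) × Fin N => reflectFrom (p.2 + 1) p.1)
      {p | psum p.1 N = 1 ∧ IsRecord p.1 (p.2 + 1)} {v | 0 < psum v N} := by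
  refine ⟨?_, ?_, ?_⟩
  · rintro ⟨u, i⟩ ⟨hsum : psum u N = 1, hrec⟩
    have height_pos : 0 < psum u (i + 1) := hrec.1
    change 0 < psum (reflectFrom (i + 1) u) N
    rw [psum_reflectFrom_length]
    omega
  · rintro ⟨u, i⟩ ⟨hsum : psum u N = 1, hrec : IsRecord u (i + 1)⟩
      ⟨u', i'⟩ ⟨hsum' : psum u' N = 1, hrec' : IsRecord u' (i' + 1)⟩
      (heq : reflectFrom (i + 1) u = reflectFrom (i' + 1) u')
    have hv : IsRecord (reflectFrom (i + 1) u) (i + 1) := hrec.reflectFrom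
    have hv' : IsRecord (reflectFrom (i + 1) u) (i' + 1) := heq ▸ hrec'.reflectFrom
    have height_eq :
        psum (reflectFrom (i + 1) u) (i + 1) = psum (reflectFrom (i + 1) u) (i' + 1) := by
      have sum_eq := congrArg (psum · N) heq
      simp only [psum_reflectFrom_length] at sum_eq
      rw [psum_reflectFrom_of_le _ u le_rfl, heq, psum_reflectFrom_of_le _ u' le_rfl]
      omega
    obtain rfl : i = i' := Fin.ext (Nat.succ_injective (hv.eq_of_psum_eq hv' height_eq))
    exact Prod.ext ((reflectFrom_involutive _).injective heq) rfl
  · intro v (hv : 0 < psum v N)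
    obtain ⟨h, hh⟩ := (odd_psum_length_iff v).mpr hN
    obtain ⟨m, hmN, hrec, height⟩ :=
      exists_isRecord_psum_eq (w := v) (k := N) (h := h + 1) (by omega) (by omega)
    obtain ⟨i, rfl⟩ := Nat.exists_eq_add_of_lt hrec.pos
    rw [zero_add] at hmN hrec height
    refine ⟨(reflectFrom (i + 1) v, ⟨i, hmN⟩), ⟨?_, hrec.reflectFrom⟩,
      reflectFrom_involutive _ v⟩
    change psum (reflectFrom (i + 1) v) N = 1
    rw [psum_reflectFrom_length]
    omega

theorem two_mul_ncard_psum_pos (hN : Odd N) :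
    2 * {v : Fin N → Bool | 0 < psum v N}.ncard = 2 ^ N := by
  have compl_eq : {v : Fin N → Bool | 0 < psum v N}ᶜ = reflectFrom 0 '' {v | 0 < psum v N} := by
    rw [(reflectFrom_involutive 0).image_eq_preimage_symm]
    ext v
    have : psum v N ≠ 0 := fun h0 => by simpa [h0] using (odd_psum_length_iff v).mpr hN
    simp only [Set.mem_compl_iff, Set.mem_preimage, Set.mem_ofPred_eq, psum_reflectFrom_length,
      psum_zero]
    omega
  have total := Set.ncard_add_ncard_compl {v : Fin N → Bool | 0 < psum v N}
  rw [compl_eq, Set.ncard_image_of_injective _ (reflectFrom_involutive 0).injective] at total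
  rw [two_mul, total]
  simp

theorem two_mul_card_isStrictLTRMax (hN : Odd N) :
    2 * Nat.card {p : (Fin (N + 1) → Bool) × ℕ // IsBridge p.1 ∧ IsStrictLTRMax p.1 p.2} =
      2 ^ N := by
  rw [← two_mul_ncard_psum_pos hN, ← (bijOn_reflectFrom hN).ncard_eq, bijOn_insertNth_down.ncard_eq]
  rfl

end Counting

/-- For every integer `n ≥ 1`, the total number of strict
left-to-right maxima in all Dyck bridges of length `2n` equals `4^(n-1)`.
A strict left-to-right maximum is a peak whose height is at least `1` and
strictly greater than the height of every peak occurring earlier. -/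
theorem stmt_6 (n : ℕ) (hn : 1 ≤ n) :
    Nat.card {p : (Fin (2 * n) → Bool) × ℕ //
        IsBridge p.1 ∧ IsPeak p.1 p.2 ∧ 1 ≤ peakHeight p.1 p.2 ∧
        ∀ j, IsPeak p.1 j → j < p.2 → peakHeight p.1 j < peakHeight p.1 p.2} =
      4 ^ (n - 1) := by
  obtain ⟨m, rfl⟩ := Nat.exists_eq_add_of_le' hn
  have count := two_mul_card_isStrictLTRMax (N := 2 * m + 1) (odd_two_mul_add_one m)
  rw [pow_succ', pow_mul] at count
  exact Nat.eq_of_mul_eq_mul_left two_pos count
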